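/- arXiv:1110.6884 — 5 statements merged into one kernel-verified Lean document; each statement's English description precedes it below -/
import Mathlib

section
/- The formal power series identity (1 − Σ_{n≥1} B_{n-1} x^n) · (1 + Σ_{n≥1} b_n x^n) = 1 holds, where b_n is the number of permutations of [n] avoiding the barred pattern 2̄4135̄ and B_m is the m-th Bell number. -/
/-- A permutation of [n] avoids the barred pattern 2̄4135̄: every 413-pattern
(positions i<j<k with π j < π k < π i) extends to a 24135-pattern. -/
def Avoids24135 {n : ℕ} (π : Equiv.Perm (Fin n)) : Prop :=
  ∀ i j k : Fin n, i < j → j < k → π j < π k → π k < π i →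
    ∃ h l : Fin n, h < i ∧ k < l ∧ π j < π h ∧ π h < π k ∧ π i < π l

/-- A permutation of [n] avoids the barred pattern 2̄413: every 413-pattern
extends to a 2413-pattern. -/
def Avoids2413 {n : ℕ} (π : Equiv.Perm (Fin n)) : Prop :=
  ∀ i j k : Fin n, i < j → j < k → π j < π k → π k < π i →
    ∃ h : Fin n, h < i ∧ π j < π h ∧ π h < π k

/-- The Bell number `bell m`: the number of set partitions of an m-element set. -/
noncomputable def bell (m : ℕ) : ℕ := Nat.card (Finpartition (Finset.univ : Finset (Fin m)))

/-- The number of 2̄4135̄-avoiding permutations of [n]. -/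
noncomputable def avoidCount (n : ℕ) : ℕ := Nat.card {π : Equiv.Perm (Fin n) // Avoids24135 π}

/-! Split `π` at its last entry. If that entry has `a` smaller ones, it is the `3` of a
`413`-pattern as soon as a larger entry precedes a smaller one, and no `5` can follow it; so the
entries preceding it form a direct sum `α ⊕ β` with `α` of size `a`. The last entry serves as
the `5` of every `413`-pattern inside `α` and of none inside `β`, so `π` avoids `2̄4135̄`
exactly when `α` avoids `2̄413` and `β` avoids `2̄4135̄`.

The `2̄413`-avoiding permutations correspond to the set partitions: the positions `i` and `j`
share a block when the first entry that is at least `π i` is also the first that is at least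
`π j`. Avoidance says that `π` is decreasing on each block, and since blocks with a smaller
minimum carry smaller entries, `π` is recovered from the partition.
Hence `b_{n+1} = ∑_{r+s=n} B_r b_s`. -/

section OrderFacts

theorem eq_of_lt_iff_lt {ι α : Type*} [LinearOrder α] [WellFoundedLT α] {e e' : ι ≃ α}
    (h : ∀ i j, e i < e j ↔ e' i < e' j) : e = e' := by
  have strictMono : StrictMono (e.symm.trans e') := fun x y hxy ↦ by
    simpa [← h] using hxy
  have : strictMono.orderIsoOfSurjective _ (e.symm.trans e').surjective = OrderIso.refl α :=
    OrderIso.subsingleton_of_wellFoundedLT.elim _ _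
  ext i
  simpa using (DFunLike.congr_fun this (e i)).symm

theorem exists_perm_lt_iff_lt {n : ℕ} {β : Type*} [LinearOrder β] {f : Fin n → β}
    (hf : Function.Injective f) : ∃ π : Equiv.Perm (Fin n), ∀ i j, π i < π j ↔ f i < f j := by
  have hs : StrictMono (f ∘ Tuple.sort f) :=
    (Tuple.monotone_sort f).strictMono_of_injective (hf.comp (Tuple.sort f).injective)
  exact ⟨(Tuple.sort f)⁻¹, fun i j ↦ by simp [← hs.lt_iff_lt]⟩

theorem preimage_eq_of_isLowerSet {α : Type*} [LinearOrder α] [Finite α] {σ : Equiv.Perm α}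
    {s : Set α} (hs : IsLowerSet s) (hσs : IsLowerSet (σ ⁻¹' s)) : σ ⁻¹' s = s := by
  have card_eq : (σ ⁻¹' s).ncard = s.ncard :=
    Set.ncard_preimage_of_injective_subset_range σ.injective (by simp)
  rcases hσs.total hs with h | h
  · exact Set.eq_of_subset_of_ncard_le h card_eq.ge
  · exact (Set.eq_of_subset_of_ncard_le h card_eq.le).symm

end OrderFacts

section Bell

theorem parts_subset_parts_of_part_eq {α : Type*} [DecidableEq α] {s : Finset α}
    {P Q : Finpartition s} (h : ∀ i ∈ s, P.part i = Q.part i) : P.parts ⊆ Q.parts := by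
  intro t ht
  obtain ⟨i, hi⟩ := P.nonempty_of_mem_parts ht
  have his : i ∈ s := P.subset ht hi
  rw [← P.part_eq_of_mem ht hi, h i his]
  exact Q.part_mem.2 his

theorem bell_eq_card_setoid (n : ℕ) : bell n = Nat.card (Setoid (Fin n)) := by
  classical
  refine (Nat.card_congr (Equiv.ofBijective (fun r ↦ Finpartition.ofSetoid r)
    ⟨fun r s (h : Finpartition.ofSetoid r = Finpartition.ofSetoid s) ↦ ?_, fun P ↦ ?_⟩)).symm
  · ext i j
    rw [← Finpartition.mem_part_ofSetoid_iff_rel, h, Finpartition.mem_part_ofSetoid_iff_rel]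
  · have part_eq (i : Fin n) : (Finpartition.ofSetoid (Setoid.ker P.part)).part i = P.part i := by
      ext j
      rw [Finpartition.mem_part_ofSetoid_iff_rel, Setoid.ker_def, eq_comm,
        P.mem_part_iff_part_eq_part (Finset.mem_univ j) (Finset.mem_univ i)]
    exact ⟨Setoid.ker P.part, Finpartition.ext <| Finset.Subset.antisymm
      (parts_subset_parts_of_part_eq fun i _ ↦ part_eq i)
      (parts_subset_parts_of_part_eq fun i _ ↦ (part_eq i).symm)⟩

end Bell

section BlockMin

variable {α β : Type*}

/-- The maps sending every element to the least element of its block, for some partition of `α`,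
encoded as the deflationary idempotent maps: the fibres of such a map are the blocks. -/
structure IsBlockMin [Preorder α] (m : α → α) : Prop where
  le : ∀ i, m i ≤ i
  idem : ∀ i, m (m i) = m i

theorem IsBlockMin.eq_of_ker_eq [PartialOrder α] {m m' : α → α} (hm : IsBlockMin m)
    (hm' : IsBlockMin m') (h : Setoid.ker m = Setoid.ker m') : m = m' := by
  have eq_iff (i j) : m i = m j ↔ m' i = m' j := Setoid.ext_iff.1 h i j
  funext i
  refine le_antisymm ?_ ?_
  · rw [← (eq_iff _ _).2 (hm'.idem i)]
    exact hm.le _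
  · rw [← (eq_iff _ _).1 (hm.idem i)]
    exact hm'.le _

variable [LinearOrder α] [WellFoundedLT α]

theorem exists_isBlockMin_ker_eq (r : Setoid α) : ∃ m : α → α, IsBlockMin m ∧ Setoid.ker m = r := by
  have exists_least (i : α) : ∃ a, r i a ∧ ∀ j, r i j → a ≤ j :=
    ⟨wellFounded_lt.min {j | r i j} ⟨i, r.refl i⟩, wellFounded_lt.min_mem {j | r i j} _,
      fun _ hj ↦ wellFounded_lt.min_le hj⟩
  choose m rel_m m_le using exists_least
  have m_eq {i j} (h : r i j) : m i = m j :=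
    le_antisymm (m_le i _ (r.trans h (rel_m j))) (m_le j _ (r.trans (r.symm h) (rel_m i)))
  refine ⟨m, ⟨fun i ↦ m_le i i (r.refl i), fun i ↦ (m_eq (rel_m i)).symm⟩, Setoid.ext fun i j ↦ ?_⟩
  exact ⟨fun h : m i = m j ↦ r.trans (rel_m i) (h ▸ r.symm (rel_m j)), m_eq⟩

variable [Preorder β] {f : α → β} {i j p : α}

/-- The first position at which `f` takes a value at least `f i`. For a permutation `f` avoiding
`2̄413` the fibres of `firstGe f` are the blocks of the set partition attached to `f`. -/
noncomputable def firstGe (f : α → β) (i : α) : α :=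
  wellFounded_lt.min {p | f i ≤ f p} ⟨i, le_rfl⟩

theorem le_apply_firstGe (f : α → β) (i : α) : f i ≤ f (firstGe f i) :=
  wellFounded_lt.min_mem {p | f i ≤ f p} _

theorem firstGe_le (h : f i ≤ f p) : firstGe f i ≤ p :=
  wellFounded_lt.min_le (s := {p | f i ≤ f p}) h

theorem firstGe_le_firstGe (h : f i ≤ f j) : firstGe f i ≤ firstGe f j :=
  firstGe_le (h.trans (le_apply_firstGe f j))

theorem isBlockMin_firstGe (f : α → β) : IsBlockMin (firstGe f) where
  le _ := firstGe_le le_rfl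
  idem i := le_antisymm (firstGe_le le_rfl) (firstGe_le_firstGe (le_apply_firstGe f i))

end BlockMin

section BlockKey

/-- The key by which the positions are sorted to recover a `2̄413`-avoiding permutation from its
block minima `m`: blocks in increasing order of their minima, each block decreasingly. -/
def blockKey {α : Type*} (m : α → α) (i : α) : α ×ₗ αᵒᵈ :=
  toLex (m i, OrderDual.toDual i)

theorem blockKey_injective {α : Type*} (m : α → α) : Function.Injective (blockKey m) :=
  fun _ _ h ↦ congrArg (fun x : α ×ₗ αᵒᵈ ↦ OrderDual.ofDual (ofLex x).2) h

theorem blockKey_lt_blockKey {α : Type*} [PartialOrder α] {m : α → α} {i j : α} :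
    blockKey m i < blockKey m j ↔ m i < m j ∨ m i = m j ∧ j < i := by
  simp only [blockKey, Prod.Lex.toLex_lt_toLex, OrderDual.toDual_lt_toDual]

theorem IsBlockMin.firstGe_eq {α β : Type*} [LinearOrder α] [WellFoundedLT α] [LinearOrder β]
    {m : α → α} (hm : IsBlockMin m) {f : α → β}
    (h : ∀ i j, f i < f j ↔ blockKey m i < blockKey m j) : firstGe f = m := by
  simp only [blockKey_lt_blockKey] at h
  funext i
  refine le_antisymm (firstGe_le (not_lt.1 fun hlt ↦ ?_)) (not_lt.1 fun hlt ↦ ?_)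
  · have hmi : ¬ i < m i := (hm.le i).not_gt
    simp [h, hm.idem, hmi] at hlt
  · have : m (firstGe f i) < m i := (hm.le _).trans_lt hlt
    exact (le_apply_firstGe f i).not_gt ((h _ _).2 (Or.inl this))

end BlockKey

section Avoids2413

variable {n : ℕ} {π : Equiv.Perm (Fin n)}

theorem avoids2413_iff_forall_firstGe_eq :
    Avoids2413 π ↔ ∀ i j, firstGe π i = firstGe π j → i < j → π j < π i := by
  constructor
  · intro avoids i j hfirst hij
    by_contra! hle
    have hlt : π i < π j := hle.lt_of_ne (π.injective.ne hij.ne)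
    have hp : π j ≤ π (firstGe π i) := hfirst ▸ le_apply_firstGe π j
    have hpi : firstGe π i < i :=
      (firstGe_le le_rfl).lt_of_ne fun h ↦ (h ▸ hp).not_gt hlt
    have hjp : π j < π (firstGe π i) := hp.lt_of_ne (π.injective.ne (hpi.trans hij).ne.symm)
    -- A `2` completing the `413`-pattern `firstGe π i < i < j` precedes the first entry `≥ π i`.
    obtain ⟨h, hh, hih, -⟩ := avoids _ i j hpi hij hlt hjp
    exact (firstGe_le hih.le).not_gt hh
  · intro decreasing i j k hij hjk hπjk hπki
    by_contra! no_two
    have hji : firstGe π j ≤ i := firstGe_le (hπjk.trans hπki).le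
    have hle : π k ≤ π (firstGe π j) := by
      rcases hji.lt_or_eq with hlt | heq
      · exact no_two _ hlt ((le_apply_firstGe π j).lt_of_ne (π.injective.ne (hlt.trans hij).ne'))
      · exact heq ▸ hπki.le
    have hfirst : firstGe π j = firstGe π k :=
      le_antisymm (firstGe_le_firstGe hπjk.le) (firstGe_le hle)
    exact (decreasing j k hfirst hjk).not_gt hπjk

theorem avoids2413_iff_lt_iff_blockKey_lt :
    Avoids2413 π ↔ ∀ i j, π i < π j ↔ blockKey (firstGe π) i < blockKey (firstGe π) j := by
  simp only [avoids2413_iff_forall_firstGe_eq, blockKey_lt_blockKey]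
  refine ⟨fun decreasing i j ↦ ⟨fun hlt ↦ ?_, ?_⟩, fun h i j hfirst hij ↦ ?_⟩
  · refine (firstGe_le_firstGe hlt.le).lt_or_eq.imp_right fun hfirst ↦ ⟨hfirst, ?_⟩
    by_contra! hij
    have : i < j := hij.lt_of_ne fun h ↦ hlt.ne (congrArg π h)
    exact (decreasing i j hfirst this).not_gt hlt
  · rintro (hlt | ⟨hfirst, hji⟩)
    · exact lt_of_not_ge fun hle ↦ (firstGe_le_firstGe hle).not_gt hlt
    · exact decreasing j i hfirst.symm hji
  · exact (h j i).2 (Or.inr ⟨hfirst.symm, hij⟩)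

theorem existsUnique_avoids2413_ker_firstGe_eq (r : Setoid (Fin n)) :
    ∃! π : {π : Equiv.Perm (Fin n) // Avoids2413 π}, Setoid.ker (firstGe π.1) = r := by
  obtain ⟨m, hm, rfl⟩ := exists_isBlockMin_ker_eq r
  obtain ⟨π, hπ⟩ := exists_perm_lt_iff_lt (blockKey_injective m)
  have hfirst : firstGe π = m := hm.firstGe_eq hπ
  refine ⟨⟨π, avoids2413_iff_lt_iff_blockKey_lt.2 (by rwa [hfirst])⟩,
    congrArg Setoid.ker hfirst, ?_⟩
  rintro ⟨σ, hσ⟩ hker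
  have hfirst' : firstGe σ = m := (isBlockMin_firstGe σ).eq_of_ker_eq hm hker
  rw [avoids2413_iff_lt_iff_blockKey_lt, hfirst'] at hσ
  exact Subtype.ext (eq_of_lt_iff_lt fun i j ↦ (hσ i j).trans (hπ i j).symm)

theorem card_avoids2413 (n : ℕ) :
    Nat.card {π : Equiv.Perm (Fin n) // Avoids2413 π} = bell n := by
  rw [bell_eq_card_setoid]
  exact Nat.card_congr (Equiv.ofBijective (fun π ↦ Setoid.ker (firstGe π.1))
    ((Function.bijective_iff_existsUnique _).2 existsUnique_avoids2413_ker_firstGe_eq))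

end Avoids2413

section AppendEntry

variable {n : ℕ}

theorem avoids24135_iff_exists_lt_and_exists_gt {π : Equiv.Perm (Fin n)} :
    Avoids24135 π ↔ ∀ i j k, i < j → j < k → π j < π k → π k < π i →
      ∃ h < i, π j < π h ∧ π h < π k ∧ ∃ l > k, π i < π l := by
  constructor
  · intro avoids i j k hij hjk hπjk hπki
    obtain ⟨h, l, hhi, hkl, hjh, hhk, hil⟩ := avoids i j k hij hjk hπjk hπki
    exact ⟨h, hhi, hjh, hhk, l, hkl, hil⟩
  · intro extend i j k hij hjk hπjk hπki
    obtain ⟨h, hhi, hjh, hhk, l, hkl, hil⟩ := extend i j k hij hjk hπjk hπki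
    exact ⟨h, l, hhi, hkl, hjh, hhk, hil⟩

/-- The permutation of `[n + 1]` with last entry `p` whose remaining entries are in the same
relative order as those of `σ`. -/
def appendEntry (p : Fin (n + 1)) (σ : Equiv.Perm (Fin n)) : Equiv.Perm (Fin (n + 1)) :=
  finSuccEquivLast.trans (σ.optionCongr.trans (finSuccEquiv' p).symm)

@[simp]
theorem appendEntry_last (p : Fin (n + 1)) (σ : Equiv.Perm (Fin n)) :
    appendEntry p σ (Fin.last n) = p := by
  simp [appendEntry]

@[simp]
theorem appendEntry_castSucc (p : Fin (n + 1)) (σ : Equiv.Perm (Fin n)) (i : Fin n) :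
    appendEntry p σ i.castSucc = p.succAbove (σ i) := by
  simp [appendEntry]

theorem appendEntry_injective (p : Fin (n + 1)) : Function.Injective (appendEntry p) :=
  fun σ τ h ↦ Equiv.ext fun i ↦ by simpa using Equiv.congr_fun h i.castSucc

theorem exists_appendEntry_eq (π : Equiv.Perm (Fin (n + 1))) :
    ∃ σ, appendEntry (π (Fin.last n)) σ = π := by
  have ne_last (i : Fin n) : π i.castSucc ≠ π (Fin.last n) :=
    π.injective.ne i.castSucc_lt_last.ne
  choose s hs using fun i ↦ Fin.exists_succAbove_eq (ne_last i)
  have s_injective : Function.Injective s := fun i j h ↦ by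
    simpa [hs] using congrArg (π (Fin.last n)).succAbove h
  refine ⟨Equiv.ofBijective s (Finite.injective_iff_bijective.1 s_injective), Equiv.ext fun i ↦ ?_⟩
  induction i using Fin.lastCases <;> simp [hs]

theorem avoids24135_appendEntry_iff {p : Fin (n + 1)} {σ : Equiv.Perm (Fin n)} :
    Avoids24135 (appendEntry p σ) ↔ IsLowerSet {i | (σ i).castSucc < p} ∧
      ∀ i j k, i < j → j < k → σ j < σ k → σ k < σ i →
        ∃ h < i, σ j < σ h ∧ σ h < σ k ∧ ((σ i).castSucc < p ∨ ∃ l > k, σ i < σ l) := by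
  constructor
  · intro avoids
    refine ⟨isLowerSet_iff_forall_lt.2 fun i j hji hi ↦ ?_, fun i j k hij hjk hσjk hσki ↦ ?_⟩
    · by_contra hj
      -- The `413`-pattern formed by `j`, `i` and the last position leaves no room for a `5`.
      obtain ⟨-, l, -, hl, -⟩ := avoids j.castSucc i.castSucc (Fin.last n) hji i.castSucc_lt_last
        (by simpa [Fin.succAbove_lt_iff_castSucc_lt] using hi)
        (by simpa [Fin.lt_succAbove_iff_le_castSucc] using hj)
      exact (Fin.le_last l).not_gt hl
    · obtain ⟨h, l, hhi, hkl, hjh, hhk, hil⟩ :=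
        avoids i.castSucc j.castSucc k.castSucc hij hjk (by simpa) (by simpa)
      obtain ⟨h, rfl⟩ := Fin.exists_castSucc_eq.2 (hhi.trans i.castSucc_lt_last).ne
      simp only [appendEntry_castSucc, Fin.succAbove_lt_succAbove_iff] at hjh hhk
      refine ⟨h, hhi, hjh, hhk, ?_⟩
      rcases l.eq_castSucc_or_eq_last with ⟨l, rfl⟩ | rfl
      · exact Or.inr ⟨l, hkl, by simpa using hil⟩
      · exact Or.inl (by simpa [Fin.succAbove_lt_iff_castSucc_lt] using hil)
  · rintro ⟨lower, extend⟩ i j k hij hjk hπjk hπki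
    obtain ⟨j, rfl⟩ := Fin.exists_castSucc_eq.2 (hjk.trans_le k.le_last).ne
    obtain ⟨i, rfl⟩ := Fin.exists_castSucc_eq.2 (hij.trans j.castSucc_lt_last).ne
    rcases k.eq_castSucc_or_eq_last with ⟨k, rfl⟩ | rfl
    · simp only [appendEntry_castSucc, Fin.succAbove_lt_succAbove_iff] at hπjk hπki
      obtain ⟨h, hhi, hjh, hhk, hi | ⟨l, hkl, hil⟩⟩ := extend i j k hij hjk hπjk hπki
      · exact ⟨h.castSucc, Fin.last n, hhi, k.castSucc_lt_last, by simpa, by simpa,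
          by simpa [Fin.succAbove_lt_iff_castSucc_lt]⟩
      · exact ⟨h.castSucc, l.castSucc, hhi, hkl, by simpa, by simpa, by simpa⟩
    · simp only [appendEntry_castSucc, appendEntry_last, Fin.succAbove_lt_iff_castSucc_lt,
        Fin.lt_succAbove_iff_le_castSucc] at hπjk hπki
      exact absurd (lower (Fin.castSucc_lt_castSucc_iff.1 hij).le hπjk) hπki.not_gt

end AppendEntry

section DirectSum

variable {a b : ℕ}

/-- The direct sum `α ⊕ β` of permutations: `α` on the first `a` letters, followed by `β` shifted
up by `a`. -/
def directSum (α : Equiv.Perm (Fin a)) (β : Equiv.Perm (Fin b)) : Equiv.Perm (Fin (a + b)) :=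
  finSumFinEquiv.permCongr (Equiv.sumCongr α β)

@[simp]
theorem directSum_castAdd (α : Equiv.Perm (Fin a)) (β : Equiv.Perm (Fin b)) (x : Fin a) :
    directSum α β (x.castAdd b) = (α x).castAdd b := by
  simp [directSum]

@[simp]
theorem directSum_natAdd (α : Equiv.Perm (Fin a)) (β : Equiv.Perm (Fin b)) (y : Fin b) :
    directSum α β (y.natAdd a) = (β y).natAdd a := by
  simp [directSum]

theorem directSum_injective :
    Function.Injective fun αβ : Equiv.Perm (Fin a) × Equiv.Perm (Fin b) ↦
      directSum αβ.1 αβ.2 :=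
  finSumFinEquiv.permCongr.injective.comp Equiv.Perm.sumCongrHom_injective

theorem exists_directSum_eq {σ : Equiv.Perm (Fin (a + b))}
    (h : ∀ i : Fin (a + b), (i : ℕ) < a → (σ i : ℕ) < a) : ∃ α β, directSum α β = σ := by
  have mapsTo : Set.MapsTo (finSumFinEquiv.permCongr.symm σ)
      (Set.range (Sum.inl : Fin a → Fin a ⊕ Fin b)) (Set.range Sum.inl) := by
    rintro _ ⟨x, rfl⟩
    refine ⟨(σ (x.castAdd b)).castLT (h _ x.2), ?_⟩
    simp [← finSumFinEquiv_symm_apply_castAdd]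
  obtain ⟨⟨α, β⟩, hαβ⟩ := Equiv.Perm.mem_sumCongrHom_range_of_perm_mapsTo_inl mapsTo
  exact ⟨α, β, (Equiv.symm_apply_eq _).1 hαβ.symm |>.symm⟩

variable {p : Fin (a + b + 1)}

theorem exists_appendEntry_directSum_eq (hp : (p : ℕ) = a) {π : Equiv.Perm (Fin (a + b + 1))}
    (avoids : Avoids24135 π) (hπ : π (Fin.last (a + b)) = p) :
    ∃ α β, appendEntry p (directSum α β) = π := by
  obtain ⟨σ, rfl⟩ : ∃ σ, appendEntry p σ = π := hπ ▸ exists_appendEntry_eq π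
  have small_lower : IsLowerSet {v : Fin (a + b) | v.castSucc < p} :=
    fun _ _ hle hlt ↦ (Fin.castSucc_le_castSucc_iff.2 hle).trans_lt hlt
  have small_iff := Set.ext_iff.1 <|
    preimage_eq_of_isLowerSet small_lower (avoids24135_appendEntry_iff.1 avoids).1
  obtain ⟨α, β, rfl⟩ : ∃ α β, directSum α β = σ :=
    exists_directSum_eq fun i hi ↦ by simpa [Fin.lt_def, hp, hi] using small_iff i
  exact ⟨α, β, rfl⟩

theorem avoids24135_appendEntry_directSum_iff (hp : (p : ℕ) = a)
    {α : Equiv.Perm (Fin a)} {β : Equiv.Perm (Fin b)} :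
    Avoids24135 (appendEntry p (directSum α β)) ↔ Avoids2413 α ∧ Avoids24135 β := by
  have low_lt_low (x x' : Fin a) : x.castAdd b < x'.castAdd b ↔ x < x' := Iff.rfl
  have low_lt_high (x : Fin a) (y : Fin b) : x.castAdd b < y.natAdd a := by
    simp only [Fin.lt_def, Fin.val_castAdd, Fin.val_natAdd]; omega
  have low_lt (x : Fin a) : (x.castAdd b).castSucc < p := by
    simp only [Fin.lt_def, Fin.val_castSucc, Fin.val_castAdd]; omega
  have le_high (y : Fin b) : p ≤ y.castSucc.natAdd a := by
    simp only [Fin.le_def, Fin.val_castSucc, Fin.val_natAdd]; omega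
  rw [avoids24135_appendEntry_iff, avoids24135_iff_exists_lt_and_exists_gt]
  simp only [isLowerSet_iff_forall_lt, ← finSumFinEquiv.forall_congr_right,
    ← finSumFinEquiv.exists_congr_right, Sum.forall, Sum.exists]
  -- A triple of positions meeting both summands is never a `413`-pattern, and the last entry is a
  -- possible `5` exactly for the patterns inside `α`.
  simp [low_lt_low, low_lt_high, (low_lt_high _ _).not_gt, low_lt,
    (le_high _).not_gt, Avoids2413]

theorem card_avoids24135_last_eq (hp : (p : ℕ) = a) :
    Nat.card {π : Equiv.Perm (Fin (a + b + 1)) // Avoids24135 π ∧ π (Fin.last (a + b)) = p} =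
      bell a * avoidCount b := by
  rw [← card_avoids2413, avoidCount, ← Nat.card_prod]
  symm
  refine Nat.card_congr (Equiv.ofBijective (fun αβ ↦ ⟨appendEntry p (directSum αβ.1.1 αβ.2.1),
    (avoids24135_appendEntry_directSum_iff hp).2 ⟨αβ.1.2, αβ.2.2⟩, appendEntry_last _ _⟩)
    ⟨?_, ?_⟩)
  · rintro ⟨⟨α, hα⟩, ⟨β, hβ⟩⟩ ⟨⟨α', hα'⟩, ⟨β', hβ'⟩⟩ h
    have : (α, β) = (α', β') :=
      directSum_injective (appendEntry_injective p (congrArg Subtype.val h))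
    simpa using this
  · rintro ⟨π, avoids, hπ⟩
    obtain ⟨α, β, rfl⟩ := exists_appendEntry_directSum_eq hp avoids hπ
    obtain ⟨hα, hβ⟩ := (avoids24135_appendEntry_directSum_iff hp).1 avoids
    exact ⟨⟨⟨α, hα⟩, ⟨β, hβ⟩⟩, rfl⟩

end DirectSum

section Recurrence

theorem avoidCount_zero : avoidCount 0 = 1 :=
  Nat.card_eq_one_iff_unique.2 ⟨inferInstance, ⟨1, fun i ↦ i.elim0⟩⟩

theorem avoidCount_succ (n : ℕ) :
    avoidCount (n + 1) =
      ∑ ab ∈ Finset.HasAntidiagonal.antidiagonal n, bell ab.1 * avoidCount ab.2 := by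
  calc avoidCount (n + 1)
    _ = ∑ p : Fin (n + 1), Nat.card {π : Equiv.Perm (Fin (n + 1)) //
          Avoids24135 π ∧ π (Fin.last n) = p} := by
      rw [avoidCount, ← Nat.card_sigma]
      exact Nat.card_congr ((Equiv.sigmaFiberEquiv fun π : {π // Avoids24135 π} ↦
        π.1 (Fin.last n)).symm.trans (Equiv.sigmaCongrRight fun p ↦
          Equiv.subtypeSubtypeEquivSubtypeInter Avoids24135
            fun π : Equiv.Perm (Fin (n + 1)) ↦ π (Fin.last n) = p))
    _ = ∑ p : Fin (n + 1), bell p * avoidCount (n - p) := by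
      refine Finset.sum_congr rfl fun p _ ↦ ?_
      rcases p with ⟨a, ha⟩
      obtain ⟨b, rfl⟩ := Nat.exists_eq_add_of_le (Nat.lt_succ_iff.1 ha)
      rw [card_avoids24135_last_eq rfl, Nat.add_sub_cancel_left]
    _ = ∑ ab ∈ Finset.HasAntidiagonal.antidiagonal n, bell ab.1 * avoidCount ab.2 := by
      rw [Finset.Nat.sum_antidiagonal_eq_sum_range_succ_mk, Finset.sum_range]

theorem mk_avoidCount_eq (R : Type*) [Semiring R] :
    PowerSeries.mk (fun n ↦ (avoidCount n : R)) = 1 + PowerSeries.X *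
      (PowerSeries.mk (fun n ↦ (bell n : R)) * PowerSeries.mk (fun n ↦ (avoidCount n : R))) := by
  ext n
  cases n with
  | zero => simp [avoidCount_zero]
  | succ n =>
    rw [map_add, PowerSeries.coeff_succ_X_mul, PowerSeries.coeff_mul]
    simp [PowerSeries.coeff_one, avoidCount_succ]

end Recurrence

theorem stmt1_general (R : Type*) [Ring R] :
    (1 - PowerSeries.mk (fun n => if n = 0 then 0 else (bell (n - 1) : R))) *
      (1 + PowerSeries.mk (fun n => if n = 0 then 0 else (avoidCount n : R))) = 1 := by
  have hbell : PowerSeries.mk (fun n => if n = 0 then 0 else (bell (n - 1) : R)) =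
      PowerSeries.X * PowerSeries.mk (fun n ↦ (bell n : R)) := by
    ext n
    cases n <;> simp [PowerSeries.coeff_succ_X_mul]
  have havoid : 1 + PowerSeries.mk (fun n => if n = 0 then 0 else (avoidCount n : R)) =
      PowerSeries.mk (fun n ↦ (avoidCount n : R)) := by
    ext n
    cases n <;> simp [avoidCount_zero, PowerSeries.coeff_one]
  rw [hbell, havoid, sub_mul, one_mul, mul_assoc, sub_eq_iff_eq_add]
  exact mk_avoidCount_eq R

/-- (1 − Σ_{n≥1} B_{n-1} xⁿ) · (1 + Σ_{n≥1} b_n xⁿ) = 1 as formal power series over ℚ. -/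
theorem stmt1 :
    (1 - PowerSeries.mk (fun n => if n = 0 then 0 else (bell (n - 1) : ℚ))) *
      (1 + PowerSeries.mk (fun n => if n = 0 then 0 else (avoidCount n : ℚ))) = 1 :=
  stmt1_general ℚ
end

section
/- For every n ≥ 1, the number of permutations of [n] avoiding the barred pattern 2̄4135̄ equals the sum, over all compositions (k_1, k_2, …, k_r) of n into positive parts, of the product B_{k_1−1} · B_{k_2−1} · … · B_{k_r−1}, where B_m denotes the m-th Bell number. -/
namespace BarredPattern

/-! ### Counting by color classes -/

section Fiberwise

variable {α β ι : Type*}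

theorem card_eq_sum_card_fiberwise [Finite α] (f : α → ι) (t : Finset ι)
    (hf : ∀ x, f x ∈ t) : Nat.card α = ∑ i ∈ t, Nat.card {x // f x = i} := by
  classical
  have := Fintype.ofFinite α
  simp only [Nat.card_eq_fintype_card, Fintype.card_subtype]
  exact Finset.card_eq_sum_card_fiberwise fun x _ => hf x

theorem card_subtype_eq_sum_card_fiberwise [Finite α] {p : α → Prop} (f : α → ι) (t : Finset ι)
    (hf : ∀ x, f x ∈ t) :
    Nat.card {x // p x} = ∑ i ∈ t, Nat.card {x // p x ∧ f x = i} := by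
  rw [card_eq_sum_card_fiberwise (fun x : {x // p x} => f x) t fun x => hf x]
  exact Finset.sum_congr rfl fun i _ =>
    Nat.card_congr (Equiv.subtypeSubtypeEquivSubtypeInter p fun x => f x = i)

/-- A bijection compatible with colorings `f` of its domain and `g` of its codomain is the same as
a bijection between the two color classes of each color. -/
def fiberwiseEquiv (f : α → ι) (g : β → ι) :
    {e : α ≃ β // ∀ x, g (e x) = f x} ≃ ∀ i, (f ⁻¹' {i} ≃ g ⁻¹' {i}) where
  toFun e i := e.1.subtypeEquiv fun x => by simp [e.2 x]
  invFun E := ⟨Equiv.ofPreimageEquiv E, Equiv.ofPreimageEquiv_map E⟩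
  left_inv e := by ext x; rfl
  right_inv E := by
    ext i ⟨x, rfl⟩
    rfl

theorem card_equiv_fiberwise [Fintype ι] (f : α → ι) (g : β → ι)
    (P : ∀ i, (f ⁻¹' {i} → β) → Prop) :
    Nat.card {e : α ≃ β // (∀ x, g (e x) = f x) ∧ ∀ i, P i ((f ⁻¹' {i}).domRestrict e)} =
      ∏ i, Nat.card {e : f ⁻¹' {i} ≃ g ⁻¹' {i} // P i fun x => e x} := by
  rw [← Nat.card_pi]
  exact Nat.card_congr <|
    (Equiv.subtypeSubtypeEquivSubtypeInter _ _).symm.trans <|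
      ((fiberwiseEquiv f g).subtypeEquiv fun e => Iff.rfl).trans
        (Equiv.subtypePiEquivPi (p := fun i e => P i fun x => e x))

theorem card_equiv_singleton (a : α) (b : β) :
    Nat.card (({a} : Set α) ≃ ({b} : Set β)) = 1 := by
  rw [Nat.card_congr (Equiv.equivCongr (.refl _) (.ofUnique _ ({a} : Set α))), Nat.card_unique]

end Fiberwise

/-! ### Properties of sequences -/

/-- A property of sequences of values in a linear order `β`, with positions in a linear order `α`.
Subsequences are restrictions to sets of positions, which keep the original positions and values. -/
abbrev SeqProperty := ∀ ⦃α β : Type⦄ [LinearOrder α] [LinearOrder β], (α → β) → Prop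

namespace SeqProperty

/-- A property that depends only on the relative order of the positions and of the values. -/
def OrderInvariant (P : SeqProperty) : Prop :=
  ∀ ⦃α α' β β' : Type⦄ [LinearOrder α] [LinearOrder α'] [LinearOrder β] [LinearOrder β']
    (φ : α ≃o α') (f : α → β) (g : α' → β'), (∀ x y, f x < f y ↔ g (φ x) < g (φ y)) → (P f ↔ P g)

/-- The number of permutations of `[n]` with the property `P`. -/
noncomputable def count (P : SeqProperty) (n : ℕ) : ℕ := Nat.card {e : Equiv.Perm (Fin n) // P e}

end SeqProperty

/-- The decreasing sequences. -/
def SeqAnti : SeqProperty := fun _ _ _ _ f => StrictAnti f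

/-- `Avoids2413` for sequences. -/
def SeqAvoids2413 : SeqProperty := fun α _ _ _ f =>
  ∀ i j k : α, i < j → j < k → f j < f k → f k < f i → ∃ h, h < i ∧ f j < f h ∧ f h < f k

/-- `Avoids24135` for sequences. -/
def SeqAvoids24135 : SeqProperty := fun α _ _ _ f =>
  ∀ i j k : α, i < j → j < k → f j < f k → f k < f i →
    ∃ h l, h < i ∧ k < l ∧ f j < f h ∧ f h < f k ∧ f i < f l

theorem SeqAnti.orderInvariant : SeqAnti.OrderInvariant := by
  intro _ _ _ _ _ _ _ _ φ f g hfg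
  simp [SeqAnti, StrictAnti, φ.surjective.forall, hfg]

theorem SeqAvoids2413.orderInvariant : SeqAvoids2413.OrderInvariant := by
  intro _ _ _ _ _ _ _ _ φ f g hfg
  simp [SeqAvoids2413, φ.surjective.forall, φ.surjective.exists, hfg]

theorem SeqAvoids24135.orderInvariant : SeqAvoids24135.OrderInvariant := by
  intro _ _ _ _ _ _ _ _ φ f g hfg
  simp [SeqAvoids24135, φ.surjective.forall, φ.surjective.exists, hfg]

theorem SeqProperty.OrderInvariant.card_equiv {P : SeqProperty} (hP : P.OrderInvariant) {n : ℕ}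
    {α β γ : Type} [LinearOrder α] [Finite α] [LinearOrder β] [Finite β] [LinearOrder γ]
    {ψ : β → γ} (hψ : StrictMono ψ) (hα : Nat.card α = n) (hβ : Nat.card β = n) :
    Nat.card {e : α ≃ β // P fun x => ψ (e x)} = P.count n := by
  have := Fintype.ofFinite α
  have := Fintype.ofFinite β
  rw [Nat.card_eq_fintype_card] at hα hβ
  let a := Fintype.orderIsoFinOfCardEq α hα
  let b := Fintype.orderIsoFinOfCardEq β hβ
  exact Nat.card_congr <| (a.symm.toEquiv.equivCongr b.symm.toEquiv).subtypeEquiv fun e =>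
    hP a.symm _ _ fun x y => by simp [hψ.lt_iff_lt]

theorem count_seqAnti (n : ℕ) : SeqAnti.count n = 1 := by
  rw [SeqProperty.count, Nat.card_eq_one_iff_exists]
  refine ⟨⟨Fin.revPerm, Fin.rev_strictAnti⟩, fun ⟨e, he⟩ => Subtype.ext <| Equiv.ext fun x => ?_⟩
  have hid : e ∘ Fin.rev = id :=
    (StrictAnti.comp he Fin.rev_strictAnti).range_inj strictMono_id |>.1 <| by
      simp [Fin.rev_surjective.range_comp]
  simpa using congrFun hid x.rev

/-! ### Splitting a permutation at an entry -/

section Pivot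

variable {P Q : SeqProperty} {n : ℕ} {e : Equiv.Perm (Fin n)} {a b : Fin n} {s : Finset (Fin n)}

/-- The positions of the entries of `e` that are smaller than the entry at position `a`. -/
def below (e : Equiv.Perm (Fin n)) (a : Fin n) : Finset (Fin n) := {x | e x < e a}

theorem card_below (e : Equiv.Perm (Fin n)) (a : Fin n) : (below e a).card = e a := by
  have : (below e a).map e.toEmbedding = Finset.Iio (e a) := by
    ext y
    simp [below, Finset.mem_map_equiv]
  rw [← Finset.card_map e.toEmbedding, this, Fin.card_Iio]

theorem apply_eq_of_card_below (hb : (below e a).card = b) : e a = b :=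
  Fin.ext <| (card_below e a).symm.trans hb

/-- The coloring of positions by the comparison of their entries with the entry at position `a`,
when `s` is the set of positions of the smaller entries. -/
def pivotColoring (a : Fin n) (s : Finset (Fin n)) (x : Fin n) : Ordering :=
  if x ∈ s then .lt else if x = a then .eq else .gt

theorem card_preimage_pivotColoring_lt : Nat.card (pivotColoring a s ⁻¹' {.lt}) = s.card := by
  have : pivotColoring a s ⁻¹' {.lt} = s := by
    ext x
    grind [pivotColoring]
  rw [this, Nat.card_coe_set_eq, Set.ncard_coe_finset]

theorem card_preimage_pivotColoring_gt (ha : a ∉ s) :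
    Nat.card (pivotColoring a s ⁻¹' {.gt}) = n - (s.card + 1) := by
  have : pivotColoring a s ⁻¹' {.gt} = ((insert a s)ᶜ : Finset (Fin n)) := by
    ext x
    rw [Finset.mem_coe, Finset.mem_compl]
    grind [pivotColoring]
  rw [this, Nat.card_coe_set_eq, Set.ncard_coe_finset, Finset.card_compl,
    Finset.card_insert_of_notMem ha, Fintype.card_fin]

theorem preimage_pivotColoring_eq (ha : a ∉ s) : pivotColoring a s ⁻¹' {.eq} = {a} := by
  ext x
  grind [pivotColoring]

theorem pivotColoring_below (e : Equiv.Perm (Fin n)) (a x : Fin n) :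
    pivotColoring a (below e a) x = cmp (e x) (e a) := by
  rcases lt_trichotomy (e x) (e a) with h | h | h
  · simp [pivotColoring, below, h, h.cmp_eq_lt]
  · simp [pivotColoring, below, e.injective h]
  · simp [pivotColoring, below, h.not_gt, h.cmp_eq_gt, e.injective.ne_iff.1 h.ne']

theorem forall_cmp_eq_pivotColoring_iff (ha : a ∉ s) (hb : s.card = b) :
    (∀ x, cmp (e x) b = pivotColoring a s x) ↔ below e a = s := by
  constructor
  · intro h
    have hab : e a = b := by
      rw [← cmp_eq_eq_iff, h]
      simp [pivotColoring, ha]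
    ext x
    rw [below, Finset.mem_filter_univ, hab, ← cmp_eq_lt_iff, h]
    grind [pivotColoring]
  · rintro rfl x
    rw [pivotColoring_below, apply_eq_of_card_below hb]

theorem card_domRestrict_and_below_eq (hP : P.OrderInvariant) (hQ : Q.OrderInvariant) (ha : a ∉ s) :
    Nat.card {e : Equiv.Perm (Fin n) // (P ({x | e x < e a}.domRestrict e) ∧
      Q ({x | e a < e x}.domRestrict e)) ∧ below e a = s} =
      P.count s.card * Q.count (n - (s.card + 1)) := by
  obtain ⟨b, hb⟩ : ∃ b : Fin n, s.card = b :=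
    ⟨⟨s.card, by simpa using Finset.card_lt_univ_of_notMem ha⟩, rfl⟩
  let f := pivotColoring a s
  let g (y : Fin n) := cmp y b
  let R : ∀ i, (f ⁻¹' {i} → Fin n) → Prop
    | .lt, u => P u
    | .eq, _ => True
    | .gt, u => Q u
  have hR (e : Equiv.Perm (Fin n)) :
      ((P ({x | e x < e a}.domRestrict e) ∧ Q ({x | e a < e x}.domRestrict e)) ∧ below e a = s) ↔
        (∀ x, g (e x) = f x) ∧ ∀ i, R i ((f ⁻¹' {i}).domRestrict e) := by
    rw [forall_cmp_eq_pivotColoring_iff ha hb, and_comm]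
    refine and_congr_right ?_
    rintro rfl
    have hlt : {x | e x < e a} = f ⁻¹' {.lt} := by ext; simp [f, pivotColoring_below]
    have hgt : {x | e a < e x} = f ⁻¹' {.gt} := by ext; simp [f, pivotColoring_below]
    rw [hlt, hgt]
    exact ⟨fun h => by rintro (_ | _ | _) <;> simp [R, h], fun h => ⟨h .lt, h .gt⟩⟩
  have hlt : Nat.card {e : f ⁻¹' {.lt} ≃ g ⁻¹' {.lt} // R .lt fun x => e x} = P.count s.card := by
    have hg : g ⁻¹' {.lt} = Finset.Iio b := by ext; simp [g]
    exact hP.card_equiv (Subtype.strictMono_coe _) card_preimage_pivotColoring_lt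
      (by simp [hg, hb])
  have heq : Nat.card {e : f ⁻¹' {.eq} ≃ g ⁻¹' {.eq} // R .eq fun x => e x} = 1 := by
    have hg : g ⁻¹' {.eq} = {b} := by ext; simp [g]
    rw [Nat.card_congr (Equiv.subtypeUnivEquiv fun _ => trivial), hg, preimage_pivotColoring_eq ha,
      card_equiv_singleton]
  have hgt : Nat.card {e : f ⁻¹' {.gt} ≃ g ⁻¹' {.gt} // R .gt fun x => e x} =
      Q.count (n - (s.card + 1)) := by
    have hg : g ⁻¹' {.gt} = Finset.Ioi b := by ext; simp [g]
    exact hQ.card_equiv (Subtype.strictMono_coe _) (card_preimage_pivotColoring_gt ha)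
      (by simp [hg, hb, Nat.sub_sub, Nat.add_comm])
  rw [Nat.card_congr (Equiv.subtypeEquivRight hR), card_equiv_fiberwise,
    show (Finset.univ : Finset Ordering) = {.lt, .eq, .gt} from rfl,
    Finset.prod_insert (by decide), Finset.prod_pair (by decide), hlt, heq, hgt, one_mul]

theorem below_top_eq_Iio_iff {e : Equiv.Perm (Fin (n + 1))} {m : Fin (n + 1)} :
    below e ⊤ = Finset.Iio m ↔ e ⊤ = m ∧ IsLowerSet {x | e x < e ⊤} := by
  have hcoe : (below e ⊤ : Set (Fin (n + 1))) = {x | e x < e ⊤} := by simp [below]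
  rw [← hcoe]
  constructor
  · intro h
    exact ⟨apply_eq_of_card_below (by rw [h, Fin.card_Iio]), by simpa [h] using isLowerSet_Iio m⟩
  · rintro ⟨rfl, hlow⟩
    rcases hlow.eq_univ_or_Iio with h | ⟨b, h⟩
    · simpa [below] using h.ge (Set.mem_univ ⊤)
    · have hb : below e ⊤ = Finset.Iio b := Finset.coe_injective (by rw [h, Finset.coe_Iio])
      rw [hb, apply_eq_of_card_below (by rw [hb, Fin.card_Iio] : (below e ⊤).card = b)]

end Pivot

/-! ### The structure of avoiders -/

section Structure

variable {α β : Type} [LinearOrder α] [LinearOrder β] {f : α → β}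

theorem seqAvoids2413_iff_of_bot [OrderBot α] (hinj : f.Injective) :
    SeqAvoids2413 f ↔ SeqAnti ({x | f x < f ⊥}.domRestrict f) ∧
      SeqAvoids2413 ({x | f ⊥ < f x}.domRestrict f) := by
  constructor
  · intro hf
    constructor
    · rintro ⟨x, hx⟩ ⟨y, hy⟩ hxy
      refine (hinj.ne (Subtype.coe_ne_coe.2 hxy.ne')).lt_of_le <| le_of_not_gt fun hlt => ?_
      have hbot : ⊥ < x := bot_lt_iff_ne_bot.2 <| by rintro rfl; exact hx.false
      obtain ⟨h, hh, -⟩ := hf ⊥ x y hbot hxy hlt hy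
      exact not_lt_bot hh
    · rintro ⟨i, hi⟩ ⟨j, hj⟩ ⟨k, hk⟩ hij hjk hjk' hki
      obtain ⟨h, hhi, hjh, hhk⟩ := hf i j k hij hjk hjk' hki
      exact ⟨⟨h, hj.trans hjh⟩, hhi, hjh, hhk⟩
  · rintro ⟨hanti, hup⟩ i j k hij hjk hjk' hki
    have hj : ⊥ < j := bot_le.trans_lt hij
    rcases (hinj.ne hj.ne').lt_or_gt with hj' | hj'
    · rcases (hinj.ne (hj.trans hjk).ne').lt_or_gt with hk' | hk'
      · exact absurd (hanti (a := ⟨j, hj'⟩) (b := ⟨k, hk'⟩) hjk) hjk'.not_gt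
      · exact ⟨⊥, bot_lt_iff_ne_bot.2 <| by rintro rfl; exact hk'.not_gt hki, hj', hk'⟩
    · obtain ⟨⟨h, _⟩, hh⟩ := hup ⟨i, hj'.trans (hjk'.trans hki)⟩ ⟨j, hj'⟩ ⟨k, hj'.trans hjk'⟩
        hij hjk hjk' hki
      exact ⟨h, hh⟩

theorem seqAvoids24135_iff_of_top [OrderTop α] (hinj : f.Injective) :
    SeqAvoids24135 f ↔ IsLowerSet {x | f x < f ⊤} ∧
      SeqAvoids2413 ({x | f x < f ⊤}.domRestrict f) ∧
      SeqAvoids24135 ({x | f ⊤ < f x}.domRestrict f) := by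
  constructor
  · intro hf
    refine ⟨fun x y hyx hx => lt_of_not_ge fun hy => ?_, ?_, ?_⟩
    · have hxtop : x < ⊤ := lt_top_iff_ne_top.2 <| by rintro rfl; exact hx.false
      have hyx' : y < x := hyx.lt_of_ne <| by rintro rfl; exact hx.not_ge hy
      have hy' : f ⊤ < f y := hy.lt_of_ne (hinj.ne (hyx'.trans hxtop).ne')
      obtain ⟨_, _, -, hl, -⟩ := hf y x ⊤ hyx' hxtop hx hy'
      exact not_top_lt hl
    · rintro ⟨i, hi⟩ ⟨j, hj⟩ ⟨k, hk⟩ hij hjk hjk' hki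
      obtain ⟨h, l, hhi, -, hjh, hhk, -⟩ := hf i j k hij hjk hjk' hki
      exact ⟨⟨h, hhk.trans hk⟩, hhi, hjh, hhk⟩
    · rintro ⟨i, hi⟩ ⟨j, hj⟩ ⟨k, hk⟩ hij hjk hjk' hki
      obtain ⟨h, l, hhi, hkl, hjh, hhk, hil⟩ := hf i j k hij hjk hjk' hki
      exact ⟨⟨h, hj.trans hjh⟩, ⟨l, hi.trans hil⟩, hhi, hkl, hjh, hhk, hil⟩
  · rintro ⟨hlow, hL, hU⟩ i j k hij hjk hjk' hki
    rcases lt_or_ge (f k) (f ⊤) with hk | hk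
    · have hj : f j < f ⊤ := hlow hjk.le hk
      have hi : f i < f ⊤ := hlow hij.le hj
      obtain ⟨⟨h, _⟩, hhi, hjh, hhk⟩ := hL ⟨i, hi⟩ ⟨j, hj⟩ ⟨k, hk⟩ hij hjk hjk' hki
      exact ⟨h, ⊤, hhi, lt_top_iff_ne_top.2 <| by rintro rfl; exact hk.false, hjh, hhk, hi⟩
    · have hi : f ⊤ < f i := hk.trans_lt hki
      have hj : f ⊤ < f j := (not_lt.1 fun hj => hi.not_gt (hlow hij.le hj)).lt_of_ne
        (hinj.ne (hjk.trans_le le_top).ne')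
      obtain ⟨⟨h, _⟩, ⟨l, _⟩, hhl⟩ :=
        hU ⟨i, hi⟩ ⟨j, hj⟩ ⟨k, hj.trans hjk'⟩ hij hjk hjk' hki
      exact ⟨h, l, hhl⟩

end Structure

theorem count_seqAvoids2413_succ (n : ℕ) :
    SeqAvoids2413.count (n + 1) =
      ∑ s ∈ (Finset.univ.erase (⊥ : Fin (n + 1))).powerset, SeqAvoids2413.count (n - s.card) := by
  rw [SeqProperty.count, card_subtype_eq_sum_card_fiberwise (fun e => below e ⊥)
    (Finset.univ.erase ⊥).powerset (by simp [below, Finset.subset_erase])]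
  refine Finset.sum_congr rfl fun s hs => ?_
  have hbot : ⊥ ∉ s := by simpa [Finset.subset_erase] using hs
  simp_rw [seqAvoids2413_iff_of_bot (Equiv.injective _)]
  rw [card_domRestrict_and_below_eq SeqAnti.orderInvariant SeqAvoids2413.orderInvariant hbot,
    count_seqAnti, one_mul, Nat.add_sub_add_right]

theorem avoidCount_zero : avoidCount 0 = 1 := by
  simp [avoidCount, Avoids24135]

theorem avoidCount_succ (n : ℕ) :
    avoidCount (n + 1) = ∑ m : Fin (n + 1), SeqAvoids2413.count m * avoidCount (n - m) := by
  change SeqAvoids24135.count (n + 1) =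
    ∑ m : Fin (n + 1), SeqAvoids2413.count m * SeqAvoids24135.count (n - m)
  rw [SeqProperty.count, card_subtype_eq_sum_card_fiberwise (fun e => e ⊤) Finset.univ (by simp)]
  refine Finset.sum_congr rfl fun m _ => ?_
  have hpivot := card_domRestrict_and_below_eq
    SeqAvoids2413.orderInvariant SeqAvoids24135.orderInvariant (a := ⊤)
    (s := Finset.Iio m) (by simp)
  rw [Fin.card_Iio, Nat.add_sub_add_right] at hpivot
  rw [← hpivot]
  refine Nat.card_congr <| Equiv.subtypeEquivRight fun e => ?_
  rw [seqAvoids24135_iff_of_top e.injective, below_top_eq_Iio_iff]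
  tauto

/-! ### Bell numbers -/

theorem sum_powerset_bell {α : Type*} (t : Finset α) :
    ∑ s ∈ t.powerset, Nat.bell (t.card - s.card) = Nat.bell (t.card + 1) := by
  rw [Finset.sum_powerset_apply_card (fun k => Nat.bell (t.card - k)), Nat.bell_succ,
    Nat.range_succ_eq_Iic]
  rfl

theorem count_seqAvoids2413 (n : ℕ) : SeqAvoids2413.count n = Nat.bell n := by
  induction n using Nat.strong_induction_on with
  | _ n ih =>
    cases n with
    | zero => simp [SeqProperty.count, SeqAvoids2413]
    | succ n =>
      have hcard : (Finset.univ.erase (⊥ : Fin (n + 1))).card = n := by simp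
      rw [count_seqAvoids2413_succ, Finset.sum_congr rfl fun s _ => ih (n - s.card) (by omega)]
      simpa only [hcard] using sum_powerset_bell (Finset.univ.erase (⊥ : Fin (n + 1)))

section Finpartition

variable {α : Type*} [DecidableEq α]

theorem parts_avoid_of_mem [GeneralizedBooleanAlgebra α] {a b : α} (P : Finpartition a)
    (hb : b ∈ P.parts) : (P.avoid b).parts = P.parts.erase b := by
  have hdisj {d} (hd : d ∈ P.parts) (hdb : d ≠ b) : Disjoint d b := P.disjoint hd hb hdb
  ext c
  rw [Finpartition.mem_avoid, Finset.mem_erase]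
  constructor
  · rintro ⟨d, hd, hdb, rfl⟩
    have hne : d ≠ b := by
      rintro rfl
      exact hdb le_rfl
    rw [(hdisj hd hne).sdiff_eq_left]
    exact ⟨hne, hd⟩
  · rintro ⟨hne, hc⟩
    exact ⟨c, hc, fun hcb => P.ne_bot hc ((hdisj hc hne).eq_bot_of_le hcb),
      (hdisj hc hne).sdiff_eq_left⟩

/-- A partition of `a` with the part `b` is the same as a partition of the rest `a \ b`. -/
def finpartitionEquivOfMemParts [GeneralizedBooleanAlgebra α] {a b : α} (hb : b ≠ ⊥) (hba : b ≤ a) :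
    {P : Finpartition a // b ∈ P.parts} ≃ Finpartition (a \ b) where
  toFun P := P.1.avoid b
  invFun Q := ⟨Q.extend hb disjoint_sdiff_self_left (sdiff_sup_cancel hba), by simp⟩
  left_inv P := by
    ext1
    ext1
    simp [parts_avoid_of_mem P.1 P.2, Finset.insert_erase P.2]
  right_inv Q := by
    have hbQ : b ∉ Q.parts := fun h =>
      hb <| disjoint_sdiff_self_left.eq_bot_of_ge <| Q.le h
    ext1
    rw [parts_avoid_of_mem _ (by simp)]
    simp [hbQ]

theorem card_finpartition_insert {a : α} {t : Finset α} (ha : a ∉ t) :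
    Nat.card (Finpartition (insert a t)) = ∑ s ∈ t.powerset, Nat.card (Finpartition (t \ s)) := by
  have hpart (R : Finpartition (insert a t)) : a ∈ R.part a :=
    R.mem_part (Finset.mem_insert_self a t)
  rw [card_eq_sum_card_fiberwise (fun R => (R.part a).erase a) t.powerset fun R =>
    Finset.mem_powerset.2 <| Finset.subset_insert_iff.1 (R.le (R.part_mem.2 (by simp)))]
  refine Finset.sum_congr rfl fun s hs => ?_
  have hs' : s ⊆ t := Finset.mem_powerset.1 hs
  have has : a ∉ s := fun h => ha (hs' h)
  have hiff (R : Finpartition (insert a t)) :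
      (R.part a).erase a = s ↔ insert a s ∈ R.parts := by
    constructor
    · rintro rfl
      rw [Finset.insert_erase (hpart R)]
      exact R.part_mem.2 (by simp)
    · intro h
      rw [R.part_eq_of_mem h (Finset.mem_insert_self a s), Finset.erase_insert has]
  have hsdiff : insert a t \ insert a s = t \ s := by
    rw [Finset.insert_sdiff_insert, Finset.sdiff_insert_of_notMem ha]
  rw [Nat.card_congr (Equiv.subtypeEquivRight hiff), Nat.card_congr
    (finpartitionEquivOfMemParts (Finset.insert_nonempty a s).ne_empty
      (Finset.insert_subset_insert a hs')), hsdiff]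

theorem card_finpartition (s : Finset α) : Nat.card (Finpartition s) = Nat.bell s.card := by
  induction s using Finset.strongInductionOn with
  | _ s ih =>
    rcases s.eq_empty_or_nonempty with rfl | hs
    · have : Unique (Finpartition (∅ : Finset α)) := inferInstanceAs (Unique (Finpartition ⊥))
      simp
    · obtain ⟨t, a, ha, rfl⟩ := hs.exists_cons_eq
      rw [Finset.cons_eq_insert] at ih ⊢
      have hrest (u) (hu : u ∈ t.powerset) :
          Nat.card (Finpartition (t \ u)) = Nat.bell (t.card - u.card) := by
        rw [ih _ (Finset.sdiff_subset.trans_ssubset (Finset.ssubset_insert ha)),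
          Finset.card_sdiff_of_subset (Finset.mem_powerset.1 hu)]
      rw [card_finpartition_insert ha, Finset.sum_congr rfl hrest, sum_powerset_bell,
        Finset.card_insert_of_notMem ha]

end Finpartition

theorem bell_eq (m : ℕ) : bell m = Nat.bell m := by
  rw [bell, card_finpartition, Finset.card_univ, Fintype.card_fin]

/-! ### Sums over compositions -/

/-- Splitting off the first block of a composition of `n + 1`. -/
def compositionSuccEquiv (n : ℕ) :
    (Σ m : Fin (n + 1), Composition (n - m)) ≃ Composition (n + 1) where
  toFun x := ⟨(x.1 + 1) :: x.2.blocks,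
    fun {i} hi => (List.mem_cons.1 hi).elim (fun h => h ▸ Nat.succ_pos _) x.2.blocks_pos,
    by have := x.1.2; rw [List.sum_cons, x.2.blocks_sum]; omega⟩
  invFun c := match c with
    | ⟨[], _, hs⟩ => absurd hs (by simp)
    | ⟨k :: l, hp, hs⟩ =>
      ⟨⟨k - 1, by rw [List.sum_cons] at hs; omega⟩, l, fun hi => hp (List.mem_cons_of_mem _ hi), by
        have : 0 < k := hp List.mem_cons_self
        rw [List.sum_cons] at hs
        simp only
        omega⟩
  left_inv x := rfl
  right_inv c := by
    obtain ⟨_ | ⟨k, l⟩, hp, hs⟩ := c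
    · simp at hs
    · have : 0 < k := hp List.mem_cons_self
      ext1
      simp only
      rw [Nat.sub_add_cancel this]

section Composition

variable {R : Type*} [Semiring R]

theorem sum_composition_zero (w : ℕ → R) : ∑ c : Composition 0, (c.blocks.map w).prod = 1 := by
  have : Subsingleton (Composition 0) :=
    Fintype.card_le_one_iff_subsingleton.1 (by simp [composition_card])
  have hblocks : (default : Composition 0).blocks = [] := by simp
  rw [Fintype.sum_subsingleton _ default, hblocks, List.map_nil, List.prod_nil]

theorem sum_composition_succ (w : ℕ → R) (n : ℕ) :
    ∑ c : Composition (n + 1), (c.blocks.map w).prod =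
      ∑ m : Fin (n + 1), w (m + 1) * ∑ c : Composition (n - m), (c.blocks.map w).prod := by
  rw [← (compositionSuccEquiv n).sum_comp, Fintype.sum_sigma]
  simp [compositionSuccEquiv, Finset.mul_sum]

theorem eq_sum_composition_of_renewal {w a : ℕ → R} (h0 : a 0 = 1)
    (hsucc : ∀ n, a (n + 1) = ∑ m : Fin (n + 1), w (m + 1) * a (n - m)) (n : ℕ) :
    a n = ∑ c : Composition n, (c.blocks.map w).prod := by
  induction n using Nat.strong_induction_on with
  | _ n ih =>
    cases n with
    | zero => rw [h0, sum_composition_zero]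
    | succ n =>
      rw [hsucc, sum_composition_succ]
      exact Finset.sum_congr rfl fun m _ => by rw [ih (n - m) (by omega)]

end Composition

end BarredPattern

/-- For n ≥ 1, the number of 2̄4135̄-avoiding permutations of [n] equals the sum over
compositions (k_1,…,k_r) of n of B_{k_1-1} ⋯ B_{k_r-1}. -/
theorem stmt2 (n : ℕ) (hn : 1 ≤ n) :
    avoidCount n = ∑ c : Composition n, (c.blocks.map (fun k => bell (k - 1))).prod := by
  refine BarredPattern.eq_sum_composition_of_renewal BarredPattern.avoidCount_zero (fun n => ?_) n
  simp_rw [BarredPattern.avoidCount_succ, Nat.add_sub_cancel, BarredPattern.bell_eq,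
    BarredPattern.count_seqAvoids2413]
end

section
/- Let π be a permutation of [n] avoiding the barred pattern 2̄4135̄, and let m be the position of the maximum entry n (i.e., π(m)=n). If there are positions i < j < m with π(i) > π(j) (an inversion among the entries before n, say with values c = π(i) and a = π(j), c > a), then every value b with a ≤ b ≤ c occurs at a position before m. -/
/-- Avoidance of the barred pattern 4135̄, for maps between ordered types: every 413-pattern is
followed by an entry larger than its first. Of the extension demanded by 2̄4135̄ this keeps only the
barred 5; the digits are those of 24135, not standardized. -/
def Avoids4135 {α β : Type*} [Preorder α] [Preorder β] (f : α → β) : Prop :=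
  ∀ ⦃i j k : α⦄, i < j → j < k → f j < f k → f k < f i → ∃ l, k < l ∧ f i < f l

theorem Avoids24135.avoids4135 {n : ℕ} {π : Equiv.Perm (Fin n)} (h : Avoids24135 π) :
    Avoids4135 π := by
  intro i j k hij hjk hjk' hki'
  obtain ⟨-, l, -, hkl, -, -, hil⟩ := h i j k hij hjk hjk' hki'
  exact ⟨l, hkl, hil⟩

theorem Avoids4135.antitoneOn_Ici {α β : Type*} [PartialOrder α] [LinearOrder β] {f : α → β}
    (hf : Avoids4135 f) (hinj : f.Injective) {m : α} (hm : IsMaxOn f (Set.Ici m) m) :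
    AntitoneOn f (Set.Ici m) := by
  intro k hk l hl hkl
  by_contra! hlt
  have hkl : k < l := hkl.lt_of_ne (ne_of_apply_ne f hlt.ne)
  have hmk : m < k := hk.lt_of_ne (ne_of_apply_ne f (hlt.trans_le (hm hl)).ne')
  have hlm : f l < f m := (hm hl).lt_of_ne (hinj.ne (hmk.trans hkl).ne')
  obtain ⟨p, hlp, hmp⟩ := hf hmk hkl hlt hlm
  exact hmp.not_ge (hm (hl.trans hlp.le))

theorem stmt4_general {α β : Type*} [LinearOrder α] [LinearOrder β] {f : α → β}
    (hf : Avoids4135 f) (hinj : f.Injective) {m : α} (hm : IsMaxOn f (Set.Ici m) m)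
    {i j k : α} (hij : i < j) (hjm : j < m) (hk : f k ∈ Set.Icc (f j) (f i)) : k < m := by
  by_contra! hmk
  have hjk : j < k := hjm.trans_le hmk
  have hjk' : f j < f k := hk.1.lt_of_ne (hinj.ne hjk.ne)
  have hki' : f k < f i := hk.2.lt_of_ne (hinj.ne (hij.trans hjk).ne')
  obtain ⟨l, hkl, hil⟩ := hf hij hjk hjk' hki'
  have hlk : f l ≤ f k := hf.antitoneOn_Ici hinj hm hmk (hmk.trans hkl.le) hkl.le
  exact (hki'.trans hil).not_ge hlk

/-- In a 2̄4135̄-avoiding permutation, if there is an inversion π i > π j (i < j < m,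
m the position of the maximum), then every value between π j and π i occurs before m. -/
theorem stmt4 {n : ℕ} (π : Equiv.Perm (Fin n)) (h : Avoids24135 π)
    (m : Fin n) (hm : ∀ i, π i ≤ π m)
    (i j : Fin n) (hij : i < j) (hjm : j < m) (hinv : π j < π i) :
    ∀ b : Fin n, π j ≤ b → b ≤ π i → π.symm b < m := by
  intro b hjb hbi
  exact stmt4_general h.avoids4135 π.injective (fun k _ => hm k) hij hjm (by simp [hjb, hbi])
end

section
/- For every k ≥ 1, the number of permutations π of [k] with π(k) = k that avoid the barred pattern 2̄4135̄ equals the number of permutations of [k−1] that avoid the barred pattern 2̄413. -/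
/-!
A 413-pattern has a larger entry before its last one, so it cannot end at the maximum. Hence, when
the maximum of `π` comes last, it can play the "5" for every 413-pattern, and only the requirement
of a "2" is left. Standing last, this maximum lies in no 413-pattern, and it cannot play the "2",
which comes before the "4"; so deleting it does not affect the remaining requirement.
-/

/-- The insertion of a value `q` at position `p` of a permutation: the original positions and
values are relabelled increasingly so as to skip `p` and `q`. The inverse deletes the entry
at `p`. -/
def permInsertEquiv {n : ℕ} (p q : Fin (n + 1)) :
    Equiv.Perm (Fin n) ≃ {π : Equiv.Perm (Fin (n + 1)) // π p = q} :=
  ((Equiv.refl _).equivCongr (finSuccAboveEquiv q)).trans <|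
    (Equiv.optionSubtype q).symm.trans <|
      ((finSuccEquiv' p).symm.equivCongr (Equiv.refl _)).subtypeEquiv fun e => by simp

@[simp]
lemma permInsertEquiv_apply_succAbove {n : ℕ} (p q : Fin (n + 1)) (σ : Equiv.Perm (Fin n))
    (i : Fin n) : (permInsertEquiv p q σ).1 (p.succAbove i) = q.succAbove (σ i) := by
  simpa [permInsertEquiv] using congrArg Subtype.val (finSuccAboveEquiv_apply q (σ i))

lemma Avoids24135.avoids2413 {n : ℕ} {π : Equiv.Perm (Fin n)} (hπ : Avoids24135 π) :
    Avoids2413 π := by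
  intro i j k hij hjk hjk' hki
  obtain ⟨h, -, hhi, -, hjh, hhk, -⟩ := hπ i j k hij hjk hjk' hki
  exact ⟨h, hhi, hjh, hhk⟩

lemma avoids24135_iff_avoids2413_of_apply_last {n : ℕ} {π : Equiv.Perm (Fin (n + 1))}
    (hlast : π (Fin.last n) = Fin.last n) : Avoids24135 π ↔ Avoids2413 π := by
  refine ⟨Avoids24135.avoids2413, fun hπ i j k hij hjk hjk' hki => ?_⟩
  obtain ⟨h, hhi, hjh, hhk⟩ := hπ i j k hij hjk hjk' hki
  have le_apply_last (m : Fin (n + 1)) : π m ≤ π (Fin.last n) := by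
    rw [hlast]
    exact Fin.le_last _
  have hk : k < Fin.last n :=
    (Fin.le_last k).lt_of_ne fun hk_last => hki.not_ge (hk_last ▸ le_apply_last i)
  have hi : π i < π (Fin.last n) :=
    (le_apply_last i).lt_of_ne (π.injective.ne (hij.trans (hjk.trans hk)).ne)
  exact ⟨h, Fin.last n, hhi, hk, hjh, hhk, hi⟩

lemma avoids2413_permInsertEquiv_last {n : ℕ} (σ : Equiv.Perm (Fin n)) :
    Avoids2413 (permInsertEquiv (Fin.last n) (Fin.last n) σ).1 ↔ Avoids2413 σ := by
  have h_last := (permInsertEquiv (Fin.last n) (Fin.last n) σ).2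
  have h_castSucc (i : Fin n) :
      (permInsertEquiv (Fin.last n) (Fin.last n) σ).1 i.castSucc = (σ i).castSucc := by
    simpa only [Fin.succAbove_last] using
      permInsertEquiv_apply_succAbove (Fin.last n) (Fin.last n) σ i
  -- Each quantifier splits into `castSucc` and `last`; each `last` case breaks an inequality.
  simp [Avoids2413, Fin.forall_fin_succ', Fin.exists_fin_succ', h_last, h_castSucc,
    (Fin.castSucc_lt_last _).not_gt]

/-- For every k ≥ 1 (written k+1), the number of 2̄4135̄-avoiding permutations of [k+1]
ending at their maximum equals the number of 2̄413-avoiding permutations of [k]. -/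
theorem stmt7 (k : ℕ) :
    Nat.card {π : Equiv.Perm (Fin (k + 1)) // π (Fin.last k) = Fin.last k ∧ Avoids24135 π} =
      Nat.card {σ : Equiv.Perm (Fin k) // Avoids2413 σ} := by
  calc
    _ = Nat.card {π : Equiv.Perm (Fin (k + 1)) //
          π (Fin.last k) = Fin.last k ∧ Avoids2413 π} :=
      Nat.card_congr <| Equiv.subtypeEquivRight fun _ =>
        and_congr_right avoids24135_iff_avoids2413_of_apply_last
    _ = Nat.card {π : {π : Equiv.Perm (Fin (k + 1)) // π (Fin.last k) = Fin.last k} //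
          Avoids2413 π.1} :=
      Nat.card_congr (Equiv.subtypeSubtypeEquivSubtypeInter _ _).symm
    _ = Nat.card {σ : Equiv.Perm (Fin k) // Avoids2413 σ} :=
      Nat.card_congr <| Equiv.symm <|
        (permInsertEquiv (Fin.last k) (Fin.last k)).subtypeEquiv fun σ =>
          (avoids2413_permInsertEquiv_last σ).symm
end

section
/- Let π be a permutation of [n] and let m be the position of the maximum entry n. Suppose that: (1) the entries after position m are strictly decreasing; (2) whenever i < j < m with π(i) > π(j), every value b with π(j) ≤ b ≤ π(i) occurs at a position before m; and (3) for every maximal interval of integers I ⊆ [n−1] all of whose values occur before position m (maximal among intervals of values occurring entirely before m), the subsequence of π consisting of the entries with values in I avoids the barred pattern 2̄413 (after standardizing, i.e., as a pattern). Then π avoids the barred pattern 2̄4135̄. -/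
/-- The subsequence of π consisting of entries with values in S avoids the barred
pattern 2̄413 (stated directly on relative order, which is what standardization
preserves). -/
def AvoidsIn2413 {n : ℕ} (π : Equiv.Perm (Fin n)) (S : Set (Fin n)) : Prop :=
  ∀ i j k : Fin n, π i ∈ S → π j ∈ S → π k ∈ S → i < j → j < k →
    π j < π k → π k < π i →
      ∃ h : Fin n, π h ∈ S ∧ h < i ∧ π j < π h ∧ π h < π k

/-! In a 413-pattern at positions `i < j < k`, the ascent from `j` to `k` forces `j < m`, since
the entries from position `m` on are decreasing. By (2), all values between `π j` and `π i` then
occur before `m`; hence `k < m`, and the three values lie in one maximal interval of values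
occurring before `m`, namely the order-connected component of `π j`. Condition (3) on this
interval supplies the entry `2`, and the maximum at position `m` serves as the entry `5`. -/

open Set

section OrdConnected

variable {β : Type*} [LinearOrder β] {s : Set β} {a b : β}

theorem maximal_ordConnectedComponent (ha : a ∈ s) :
    Maximal (fun t : Set β => t.OrdConnected ∧ t ⊆ s) (s.ordConnectedComponent a) :=
  ⟨⟨inferInstance, ordConnectedComponent_subset⟩, fun _t ⟨_, hts⟩ hle =>
    subset_ordConnectedComponent (hle (self_mem_ordConnectedComponent.2 ha)) hts⟩

theorem Icc_subset_ordConnectedComponent_left (hab : a ≤ b) (hs : Icc a b ⊆ s) :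
    Icc a b ⊆ s.ordConnectedComponent a :=
  subset_ordConnectedComponent (left_mem_Icc.2 hab) hs

end OrdConnected

section Tail

variable {α β : Type*} {f : α → β} {m : α}

theorem antitoneOn_Ici_of_antitoneOn_Ioi [PartialOrder α] [Preorder β]
    (hmax : ∀ i, m < i → f i ≤ f m) (hanti : AntitoneOn f (Ioi m)) : AntitoneOn f (Ici m) := by
  rw [← Ioi_insert, antitoneOn_insert_iff]
  exact ⟨fun i hi him => absurd him hi.not_ge, fun i hi _ => hmax i hi, hanti⟩

theorem lt_of_antitoneOn_Ici_of_apply_lt [LinearOrder α] [Preorder β]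
    (hanti : AntitoneOn f (Ici m)) {j k : α} (hjk : j < k) (hlt : f j < f k) : j < m := by
  by_contra! hmj
  exact hlt.not_ge (hanti hmj (hmj.trans hjk.le) hjk.le)

end Tail

section BarredPatterns

variable {α β : Type*}

/-- Avoidance of the barred pattern 2̄413 by the entries of `f` with values in `s`, extending
`AvoidsIn2413` from permutations of `Fin n` to sequences with arbitrary ordered positions and
values. -/
def AvoidsBarred2413On [LT α] [LT β] (f : α → β) (s : Set β) : Prop :=
  ∀ i j k, f i ∈ s → f j ∈ s → f k ∈ s → i < j → j < k → f j < f k → f k < f i →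
    ∃ h, f h ∈ s ∧ h < i ∧ f j < f h ∧ f h < f k

/-- Avoidance of the barred pattern 2̄4135̄, extending `Avoids24135` from permutations of `Fin n`
to sequences with arbitrary ordered positions and values. -/
def AvoidsBarred24135 [LT α] [LT β] (f : α → β) : Prop :=
  ∀ i j k, i < j → j < k → f j < f k → f k < f i →
    ∃ h l, h < i ∧ k < l ∧ f j < f h ∧ f h < f k ∧ f i < f l

theorem exists_extension_of_avoidsBarred2413On_maximal [LT α] [LinearOrder β] {f : α → β}
    {s : Set β}
    (havoid : ∀ I, Maximal (fun J : Set β => J.OrdConnected ∧ J ⊆ s) I → AvoidsBarred2413On f I)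
    {i j k : α} (hs : Icc (f j) (f i) ⊆ s) (hij : i < j) (hjk : j < k) (hlt : f j < f k)
    (hki : f k < f i) : ∃ h, h < i ∧ f j < f h ∧ f h < f k := by
  have hji : f j ≤ f i := (hlt.trans hki).le
  have hcomponent := Icc_subset_ordConnectedComponent_left hji hs
  obtain ⟨h, -, hext⟩ :=
    havoid _ (maximal_ordConnectedComponent (hs (left_mem_Icc.2 hji))) i j k
      (hcomponent (right_mem_Icc.2 hji)) (hcomponent (left_mem_Icc.2 hji))
      (hcomponent ⟨hlt.le, hki.le⟩) hij hjk hlt hki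
  exact ⟨h, hext⟩

theorem stmt8_general [LinearOrder α] [LinearOrder β] {f : α → β} (hf : f.Injective) {m : α}
    (hmax : ∀ i, f i ≤ f m) (hanti : StrictAntiOn f (Ioi m))
    (hfill : ∀ i j, i < j → j < m → f j < f i → Icc (f j) (f i) ⊆ f '' Iio m)
    (havoid : ∀ I, Maximal (fun J : Set β => J.OrdConnected ∧ J ⊆ f '' Iio m) I →
      AvoidsBarred2413On f I) :
    AvoidsBarred24135 f := by
  intro i j k hij hjk hlt hki
  have htail : AntitoneOn f (Ici m) :=
    antitoneOn_Ici_of_antitoneOn_Ioi (fun i _ => hmax i) hanti.antitoneOn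
  have hjm : j < m := lt_of_antitoneOn_Ici_of_apply_lt htail hjk hlt
  have hvalues : Icc (f j) (f i) ⊆ f '' Iio m := hfill i j hij hjm (hlt.trans hki)
  have hkm : k < m := (hf.mem_set_image (s := Iio m)).1 (hvalues ⟨hlt.le, hki.le⟩)
  obtain ⟨h, hhi, hjh, hhk⟩ :=
    exists_extension_of_avoidsBarred2413On_maximal havoid hvalues hij hjk hlt hki
  exact ⟨h, m, hhi, hkm, hjh, hhk, (hmax i).lt_of_ne (hf.ne (hij.trans hjm).ne)⟩

end BarredPatterns

/-- Sufficiency of the decomposition: conditions (1)–(3) imply 2̄4135̄-avoidance. -/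
theorem stmt8 {n : ℕ} (π : Equiv.Perm (Fin n)) (m : Fin n) (hm : ∀ i, π i ≤ π m)
    (h1 : ∀ i j : Fin n, m < i → i < j → π j < π i)
    (h2 : ∀ i j : Fin n, i < j → j < m → π j < π i →
      ∀ b : Fin n, π j ≤ b → b ≤ π i → π.symm b < m)
    (h3 : ∀ I : Set (Fin n), I.OrdConnected → (∀ v ∈ I, π.symm v < m) →
      (∀ J : Set (Fin n), J.OrdConnected → (∀ v ∈ J, π.symm v < m) → I ⊆ J → J = I) →
      AvoidsIn2413 π I) :
    Avoids24135 π := by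
  refine stmt8_general π.injective hm (fun i hi j _ => h1 i j hi) ?_ ?_ <;>
    rw [π.image_eq_preimage_symm]
  · exact fun i j hij hjm hji b hb => h2 i j hij hjm hji b hb.1 hb.2
  · exact fun I hI => h3 I hI.prop.1 hI.prop.2 fun _ hJ hJm hIJ =>
      (hI.eq_of_subset ⟨hJ, hJm⟩ hIJ).symm
end
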